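/- Orthogonality of complex Hermite polynomials: let Z be a complex Gaussian random variable with parameter ρ > 0. Then for all m, n, p, q ∈ ℕ, E[J_{m,n}(Z,ρ) · conj(J_{p,q}(Z,ρ))] = 0 unless m = p and n = q, and E[|J_{m,n}(Z,ρ)|²] = m! · n! · ρ^{m+n}. -/

import Mathlib

open MeasureTheory ProbabilityTheory Complex Finset

/-- Itô's complex Hermite polynomial `J_{m,n}(z, ρ)`. -/
noncomputable def complexHermite (m n : ℕ) (z : ℂ) (ρ : ℝ) : ℂ :=
  ∑ k ∈ Finset.range (min m n + 1),
    (-1 : ℂ) ^ k * (Nat.factorial k : ℂ) * (Nat.choose m k : ℂ) * (Nat.choose n k : ℂ) *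
      (ρ : ℂ) ^ k * z ^ (m - k) * (starRingEnd ℂ z) ^ (n - k)

/-- Law of a complex Gaussian variable with parameter `ρ`: the law of `Z = X + iY` where
`X, Y` are independent real centered Gaussian variables of mean `0` and variance `ρ/2`. -/
noncomputable def complexGaussian (ρ : ℝ) : Measure ℂ :=
  ((gaussianReal 0 (ρ/2).toNNReal).prod (gaussianReal 0 (ρ/2).toNNReal)).map
    (fun p => (p.1 : ℂ) + (p.2 : ℂ) * Complex.I)

/-!
Gaussian integration by parts in the two real coordinates gives `E[Z g] = ρ E[∂g/∂z̄]` and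
`E[Z̄ g] = ρ E[∂g/∂z]` for polynomials `g` in `Z, Z̄`. Together with the recursion
`J_{m+1,n} = z J_{m,n} - n ρ J_{m,n-1}` and `∂J_{m,n}/∂z̄ = n J_{m,n-1}`, this yields
`E[J_{m,n} g] = ρ^{m+n} E[∂_z^n ∂_z̄^m g]`. For `g = conj J_{p,q} = J_{q,p}` the right-hand side is
a multiple of `E[J_{q-n,p-m}]`, which vanishes unless `J_{q-n,p-m} = J_{0,0} = 1`.
-/

open scoped NNReal ComplexConjugate

section Algebra

variable {A R : Type*} [CommRing A] [CommRing R] [Algebra A R]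

/-- Itô's polynomial `J_{m,n}` with independent variables `z, w` in place of `z, z̄`, so that the
Wirtinger derivative `∂/∂z̄` becomes the algebraic derivation `∂/∂w`. The parameter `ρ` lives in a
coefficient ring `A`. -/
def itoHermite (ρ : A) (z w : R) (m n : ℕ) : R :=
  ∑ k ∈ range (min m n + 1),
    ((-ρ) ^ k * (k.factorial * m.choose k * n.choose k)) • (z ^ (m - k) * w ^ (n - k))

variable (ρ : A) (z w : R) (m n : ℕ)

lemma itoHermite_eq_sum_range {N : ℕ} (hN : min m n < N) :
    itoHermite ρ z w m n = ∑ k ∈ range N,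
      ((-ρ) ^ k * (k.factorial * m.choose k * n.choose k)) • (z ^ (m - k) * w ^ (n - k)) := by
  refine sum_subset (range_mono hN) fun k _ hk ↦ ?_
  rcases min_lt_iff.1 (Nat.lt_of_not_le (mt Nat.lt_succ_of_le (mem_range.not.1 hk))) with hm | hn
  · simp [Nat.choose_eq_zero_of_lt hm]
  · simp [Nat.choose_eq_zero_of_lt hn]

lemma itoHermite_swap : itoHermite ρ w z n m = itoHermite ρ z w m n := by
  simp only [itoHermite, min_comm n m, mul_comm, mul_left_comm]

lemma itoHermite_zero_zero : itoHermite ρ z w 0 0 = 1 := by simp [itoHermite]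

lemma map_itoHermite {S : Type*} [CommRing S] [Algebra A S] (φ : R →ₐ[A] S) :
    φ (itoHermite ρ z w m n) = itoHermite ρ (φ z) (φ w) m n := by
  simp [itoHermite]

lemma itoHermite_succ_left :
    itoHermite ρ z w (m + 1) n =
      z * itoHermite ρ z w m n - ρ • n • itoHermite ρ z w m (n - 1) := by
  cases n with
  | zero => simp [itoHermite, pow_succ']
  | succ n =>
    rw [itoHermite_eq_sum_range _ _ _ (m + 1) _ (min_lt_of_right_lt (n + 1).lt_succ_self),
      itoHermite_eq_sum_range _ _ _ m (n + 1) (min_lt_of_right_lt (n + 1).lt_succ_self),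
      add_tsub_cancel_right,
      itoHermite_eq_sum_range _ _ _ m n (min_lt_of_right_lt n.lt_succ_self),
      mul_sum, smul_sum, smul_sum, sum_range_succ', sum_range_succ' _ (n + 1),
      add_sub_right_comm, ← sum_sub_distrib]
    congr 1
    · refine sum_congr rfl fun k _ ↦ ?_
      have absorb : ((n + 1).choose (k + 1) : R) * (k + 1) = (n + 1) * n.choose k := by
        exact_mod_cast congrArg (Nat.cast : ℕ → R) (Nat.add_one_mul_choose_eq n k).symm
      have shift : (m.choose (k + 1) : R) * z ^ (m - k) =
          m.choose (k + 1) * (z * z ^ (m - (k + 1))) := by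
        rcases lt_or_ge k m with h | h
        · rw [← pow_succ', show m - (k + 1) + 1 = m - k by omega]
        · simp [Nat.choose_eq_zero_of_lt (Nat.lt_succ_of_le h)]
      simp only [Algebra.smul_def, map_mul, map_pow, map_neg, map_natCast,
        Nat.factorial_succ, Nat.choose_succ_succ m, Nat.add_sub_add_right, Nat.cast_add,
        Nat.cast_mul, Nat.cast_one, map_add, map_one]
      linear_combination
        (-algebraMap A R ρ) ^ (k + 1) * k.factorial * w ^ (n - k) *
          ((k + 1) * (n + 1).choose (k + 1) * shift + m.choose k * z ^ (m - k) * absorb)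
    · simp [pow_succ', mul_assoc]

variable {z w} {D : Derivation A R R}

lemma derivation_itoHermite (hz : D z = 0) (hw : D w = 1) :
    D (itoHermite ρ z w m n) = n • itoHermite ρ z w m (n - 1) := by
  rw [itoHermite_eq_sum_range _ _ _ m n (min_lt_of_right_lt n.lt_succ_self),
    itoHermite_eq_sum_range _ _ _ m (n - 1) (N := n.succ) (by omega), map_sum, smul_sum]
  refine sum_congr rfl fun k _ ↦ ?_
  have deriv_monomial (a b : ℕ) : D (z ^ a * w ^ b) = b • (z ^ a * w ^ (b - 1)) := by
    simp [Derivation.leibniz, Derivation.leibniz_pow, hz, hw, mul_left_comm]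
  have absorb : (n.choose k : A) * (n - k : ℕ) = n * (n - 1).choose k := by
    cases n with
    | zero => simp
    | succ n =>
      rw [mul_comm ((n + 1 : ℕ) : A)]
      exact_mod_cast congrArg (Nat.cast : ℕ → A) (Nat.choose_mul_succ_eq n k).symm
  rw [D.map_smul, deriv_monomial, ← Nat.cast_smul_eq_nsmul A, ← Nat.cast_smul_eq_nsmul A,
    smul_smul, smul_smul, Nat.sub_right_comm]
  congr 1
  linear_combination (-ρ) ^ k * k.factorial * m.choose k * absorb

lemma iterate_derivation_itoHermite (hz : D z = 0) (hw : D w = 1) (k : ℕ) :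
    D^[k] (itoHermite ρ z w m n) = n.descFactorial k • itoHermite ρ z w m (n - k) := by
  induction k with
  | zero => simp
  | succ k ih =>
    rw [Function.iterate_succ_apply', ih, map_nsmul, derivation_itoHermite ρ m _ hz hw, smul_smul,
      Nat.descFactorial_succ, mul_comm, Nat.sub_sub]

variable {M : Type*} [AddCommGroup M] [Module A M] {L : R →ₗ[A] M} {ρ}

lemma map_itoHermite_succ_left_mul (hz : D z = 0) (hw : D w = 1)
    (hL : ∀ g, L (z * g) = ρ • L (D g)) (g : R) :
    L (itoHermite ρ z w (m + 1) n * g) = ρ • L (itoHermite ρ z w m n * D g) := by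
  have leibniz : D (itoHermite ρ z w m n * g) =
      itoHermite ρ z w m n * D g + n • itoHermite ρ z w m (n - 1) * g := by
    rw [D.leibniz, derivation_itoHermite ρ m n hz hw, smul_eq_mul, smul_eq_mul, mul_comm g]
  rw [itoHermite_succ_left, sub_mul, mul_assoc, map_sub, hL, leibniz, smul_mul_assoc ρ,
    L.map_smul, map_add, smul_add, add_sub_cancel_right]

variable {Dz Dw : Derivation A R R}

lemma map_itoHermite_mul (hzz : Dz z = 1) (hzw : Dz w = 0) (hwz : Dw z = 0) (hww : Dw w = 1)
    (hz : ∀ g, L (z * g) = ρ • L (Dw g)) (hw : ∀ g, L (w * g) = ρ • L (Dz g)) (g : R) :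
    L (itoHermite ρ z w m n * g) = ρ ^ (m + n) • L (Dz^[n] (Dw^[m] g)) := by
  induction m generalizing g with
  | zero =>
    induction n generalizing g with
    | zero => simp [itoHermite_zero_zero]
    | succ n ih =>
      rw [← itoHermite_swap, map_itoHermite_succ_left_mul n 0 hzw hzz hw, itoHermite_swap, ih,
        smul_smul, ← pow_succ']
      rfl
  | succ m ih =>
    rw [map_itoHermite_succ_left_mul m n hwz hww hz, ih, smul_smul, ← pow_succ',
      Nat.add_right_comm]
    rfl

lemma map_itoHermite_of_ne_zero (hzz : Dz z = 1) (hzw : Dz w = 0) (hwz : Dw z = 0)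
    (hww : Dw w = 1) (hz : ∀ g, L (z * g) = ρ • L (Dw g)) (hw : ∀ g, L (w * g) = ρ • L (Dz g))
    {m n : ℕ} (h : m ≠ 0 ∨ n ≠ 0) : L (itoHermite ρ z w m n) = 0 := by
  rw [← mul_one (itoHermite ρ z w m n), map_itoHermite_mul m n hzz hzw hwz hww hz hw]
  obtain _ | m := m
  · obtain ⟨n, rfl⟩ := Nat.exists_eq_succ_of_ne_zero (h.resolve_left (by simp))
    simp [iterate_map_zero]
  · simp [iterate_map_zero]

lemma map_itoHermite_mul_itoHermite (hzz : Dz z = 1) (hzw : Dz w = 0) (hwz : Dw z = 0)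
    (hww : Dw w = 1) (hz : ∀ g, L (z * g) = ρ • L (Dw g)) (hw : ∀ g, L (w * g) = ρ • L (Dz g))
    (p q : ℕ) :
    L (itoHermite ρ z w m n * itoHermite ρ z w q p) =
      if m = p ∧ n = q then (m.factorial * n.factorial * ρ ^ (m + n)) • L 1 else 0 := by
  have lower : L (itoHermite ρ z w m n * itoHermite ρ z w q p) = ρ ^ (m + n) •
      (p.descFactorial m * q.descFactorial n) • L (itoHermite ρ z w (q - n) (p - m)) := by
    rw [map_itoHermite_mul m n hzz hzw hwz hww hz hw, iterate_derivation_itoHermite ρ q p hwz hww,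
      iterate_map_nsmul, ← itoHermite_swap, iterate_derivation_itoHermite ρ (p - m) q hzw hzz,
      itoHermite_swap, smul_smul, map_nsmul]
  rw [lower]
  split_ifs with h
  · obtain ⟨rfl, rfl⟩ := h
    simp only [Nat.descFactorial_self, Nat.sub_self, itoHermite_zero_zero,
      ← Nat.cast_smul_eq_nsmul A, smul_smul, Nat.cast_mul, mul_comm]
  · obtain hp | hq | hlt : p < m ∨ q < n ∨ (q - n ≠ 0 ∨ p - m ≠ 0) := by omega
    · simp [Nat.descFactorial_eq_zero_iff_lt.2 hp]
    · simp [Nat.descFactorial_eq_zero_iff_lt.2 hq]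
    · rw [map_itoHermite_of_ne_zero hzz hzw hwz hww hz hw hlt, smul_zero, smul_zero]

end Algebra

section Stein

variable {E : Type*} [NormedAddCommGroup E] [NormedSpace ℝ E] {μ : ℝ} {v : ℝ≥0}

lemma hasDerivAt_gaussianPDFReal (μ : ℝ) (v : ℝ≥0) (x : ℝ) :
    HasDerivAt (gaussianPDFReal μ v) (-((x - μ) / v) * gaussianPDFReal μ v x) x := by
  have exponent : HasDerivAt (fun y : ℝ ↦ -(y - μ) ^ 2 / (2 * v)) (-((x - μ) / v)) x := by
    refine ((((hasDerivAt_id' x).sub_const μ).pow 2).neg.div_const (2 * (v : ℝ))).congr_deriv ?_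
    simp [neg_div, mul_div_mul_left]
  rw [gaussianPDFReal_def]
  exact (exponent.exp.const_mul _).congr_deriv (by ring)

lemma integrable_gaussianReal_iff (hv : v ≠ 0) {f : ℝ → E} :
    Integrable f (gaussianReal μ v) ↔ Integrable (fun x ↦ gaussianPDFReal μ v x • f x) := by
  rw [gaussianReal_of_var_ne_zero μ hv, integrable_withDensity_iff_integrable_smul'
    (measurable_gaussianPDF μ v) (ae_of_all _ fun _ ↦ gaussianPDF_lt_top)]
  simp only [toReal_gaussianPDF]

lemma integral_sub_smul_gaussianReal {f f' : ℝ → E} (hf : ∀ x, HasDerivAt f (f' x) x)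
    (hf_int : Integrable f (gaussianReal μ v)) (hf'_int : Integrable f' (gaussianReal μ v))
    (hxf_int : Integrable (fun x ↦ (x - μ) • f x) (gaussianReal μ v)) :
    ∫ x, (x - μ) • f x ∂gaussianReal μ v = (v : ℝ) • ∫ x, f' x ∂gaussianReal μ v := by
  rcases eq_or_ne v 0 with rfl | hv
  · rw [gaussianReal_zero_var, NNReal.coe_zero, zero_smul]
    exact integral_eq_zero_of_ae (by simp [ae_dirac_eq, Filter.EventuallyEq])
  have hv' : (v : ℝ) ≠ 0 := by exact_mod_cast hv
  rw [integrable_gaussianReal_iff hv] at hf_int hf'_int hxf_int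
  have deriv_mul (x : ℝ) : HasDerivAt (fun y ↦ gaussianPDFReal μ v y • f y)
      (gaussianPDFReal μ v x • f' x -
        (v : ℝ)⁻¹ • gaussianPDFReal μ v x • (x - μ) • f x) x := by
    refine ((hasDerivAt_gaussianPDFReal μ v x).fun_smul (hf x)).congr_deriv ?_
    module
  have parts := integral_eq_zero_of_hasDerivAt_of_integrable deriv_mul
    (hf'_int.sub (hxf_int.fun_smul _)) hf_int
  rw [integral_sub hf'_int (hxf_int.fun_smul _), integral_smul, sub_eq_zero] at parts
  rw [integral_gaussianReal_eq_integral_smul hv, integral_gaussianReal_eq_integral_smul hv, parts,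
    smul_inv_smul₀ hv']

variable {Y : Type*} [MeasurableSpace Y] {ν : Measure Y} [SFinite ν]

lemma integral_fst_sub_smul_gaussianReal_prod {f f' : ℝ × Y → E}
    (hf : ∀ x y, HasDerivAt (fun t ↦ f (t, y)) (f' (x, y)) x)
    (hf_int : Integrable f ((gaussianReal μ v).prod ν))
    (hf'_int : Integrable f' ((gaussianReal μ v).prod ν))
    (hxf_int : Integrable (fun p ↦ (p.1 - μ) • f p) ((gaussianReal μ v).prod ν)) :
    ∫ p, (p.1 - μ) • f p ∂(gaussianReal μ v).prod ν =
      (v : ℝ) • ∫ p, f' p ∂(gaussianReal μ v).prod ν := by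
  rw [integral_prod_symm _ hxf_int, integral_prod_symm _ hf'_int, ← integral_smul]
  refine integral_congr_ae ?_
  filter_upwards [hf_int.prod_left_ae, hf'_int.prod_left_ae, hxf_int.prod_left_ae] with y h h' hx
  exact integral_sub_smul_gaussianReal (hf · y) h h' hx

lemma integral_snd_sub_smul_prod_gaussianReal {f f' : Y × ℝ → E}
    (hf : ∀ y x, HasDerivAt (fun t ↦ f (y, t)) (f' (y, x)) x)
    (hf_int : Integrable f (ν.prod (gaussianReal μ v)))
    (hf'_int : Integrable f' (ν.prod (gaussianReal μ v)))
    (hxf_int : Integrable (fun p ↦ (p.2 - μ) • f p) (ν.prod (gaussianReal μ v))) :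
    ∫ p, (p.2 - μ) • f p ∂ν.prod (gaussianReal μ v) =
      (v : ℝ) • ∫ p, f' p ∂ν.prod (gaussianReal μ v) := by
  rw [← integral_prod_swap, ← integral_prod_swap (f := f')]
  exact integral_fst_sub_smul_gaussianReal_prod (fun x y ↦ hf y x) hf_int.swap hf'_int.swap
    hxf_int.swap

end Stein

lemma hasFDerivAt_mvPolynomial_eval {𝕜 A V σ : Type*} [NontriviallyNormedField 𝕜]
    [NormedCommRing A] [NormedAlgebra 𝕜 A] [NormedAddCommGroup V] [NormedSpace 𝕜 V] [Fintype σ]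
    {c : V → σ → A} {c' : σ → V →L[𝕜] A} {x : V} (hc : ∀ i, HasFDerivAt (c · i) (c' i) x)
    (p : MvPolynomial σ A) :
    HasFDerivAt (fun y ↦ MvPolynomial.eval (c y) p)
      (∑ i, MvPolynomial.eval (c x) (MvPolynomial.pderiv i p) • c' i) x := by
  induction p using MvPolynomial.induction_on with
  | C a =>
    simp only [MvPolynomial.eval_C]
    exact (hasFDerivAt_const a x).congr_fderiv (by ext; simp)
  | add p q hp hq =>
    simp only [map_add]
    exact (hp.fun_add hq).congr_fderiv (by ext; simp [add_mul, sum_add_distrib])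
  | mul_X p j hp =>
    classical
    simp only [map_mul, MvPolynomial.eval_X]
    refine (hp.mul (hc j)).congr_fderiv ?_
    ext u
    simp [MvPolynomial.pderiv_X, Pi.single_apply, Derivation.leibniz, add_mul, sum_add_distrib,
      mul_sum, mul_assoc, apply_ite, ite_mul]

section ComplexGaussian

variable {ρ : ℝ}

lemma measurePreserving_complexGaussian (ρ : ℝ) :
    MeasurePreserving measurableEquivRealProd.symm
      ((gaussianReal 0 (ρ / 2).toNNReal).prod (gaussianReal 0 (ρ / 2).toNNReal))
      (complexGaussian ρ) := by
  refine ⟨measurableEquivRealProd.symm.measurable, congrArg (Measure.map · _) ?_⟩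
  ext1 p
  exact mk_eq_add_mul_I p.1 p.2

instance isGaussian_complexGaussian (ρ : ℝ) : IsGaussian (complexGaussian ρ) := by
  rw [← (measurePreserving_complexGaussian ρ).map_eq]
  exact isGaussian_map_equiv equivRealProdCLM.symm

section Stein

variable {E : Type*} [NormedAddCommGroup E] [NormedSpace ℝ E] {f : ℂ → E}

lemma integral_re_smul_complexGaussian (hρ : 0 ≤ ρ) (hf : Differentiable ℝ f)
    (hf_int : Integrable f (complexGaussian ρ))
    (hf'_int : Integrable (fun z ↦ fderiv ℝ f z 1) (complexGaussian ρ))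
    (hxf_int : Integrable (fun z ↦ z.re • f z) (complexGaussian ρ)) :
    ∫ z, z.re • f z ∂complexGaussian ρ = (ρ / 2) • ∫ z, fderiv ℝ f z 1 ∂complexGaussian ρ := by
  have hmp := measurePreserving_complexGaussian ρ
  have hasDerivAt_mk (x y : ℝ) : HasDerivAt (fun t : ℝ ↦ (⟨t, y⟩ : ℂ)) 1 x := by
    simp only [mk_eq_add_mul_I]
    exact (hasDerivAt_id x).ofReal_comp.add_const _
  have stein := integral_fst_sub_smul_gaussianReal_prod (μ := 0)
    (f := fun p ↦ f (measurableEquivRealProd.symm p))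
    (f' := fun p ↦ fderiv ℝ f (measurableEquivRealProd.symm p) 1)
    (fun x y ↦ (hf ⟨x, y⟩).hasFDerivAt.comp_hasDerivAt x (hasDerivAt_mk x y))
    (hmp.integrable_comp_of_integrable hf_int) (hmp.integrable_comp_of_integrable hf'_int)
    (by simpa using! hmp.integrable_comp_of_integrable hxf_int)
  rw [← hmp.integral_comp', ← hmp.integral_comp']
  simpa only [sub_zero, Real.coe_toNNReal _ (div_nonneg hρ zero_le_two)] using! stein

lemma integral_im_smul_complexGaussian (hρ : 0 ≤ ρ) (hf : Differentiable ℝ f)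
    (hf_int : Integrable f (complexGaussian ρ))
    (hf'_int : Integrable (fun z ↦ fderiv ℝ f z I) (complexGaussian ρ))
    (hyf_int : Integrable (fun z ↦ z.im • f z) (complexGaussian ρ)) :
    ∫ z, z.im • f z ∂complexGaussian ρ = (ρ / 2) • ∫ z, fderiv ℝ f z I ∂complexGaussian ρ := by
  have hmp := measurePreserving_complexGaussian ρ
  have hasDerivAt_mk (x y : ℝ) : HasDerivAt (fun t : ℝ ↦ (⟨x, t⟩ : ℂ)) I y := by
    simp only [mk_eq_add_mul_I]
    simpa using ((hasDerivAt_id y).ofReal_comp.mul_const I).const_add (x : ℂ)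
  have stein := integral_snd_sub_smul_prod_gaussianReal (μ := 0)
    (f := fun p ↦ f (measurableEquivRealProd.symm p))
    (f' := fun p ↦ fderiv ℝ f (measurableEquivRealProd.symm p) I)
    (fun x y ↦ (hf ⟨x, y⟩).hasFDerivAt.comp_hasDerivAt y (hasDerivAt_mk x y))
    (hmp.integrable_comp_of_integrable hf_int) (hmp.integrable_comp_of_integrable hf'_int)
    (by simpa using! hmp.integrable_comp_of_integrable hyf_int)
  rw [← hmp.integral_comp', ← hmp.integral_comp']
  simpa only [sub_zero, Real.coe_toNNReal _ (div_nonneg hρ zero_le_two)] using! stein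

end Stein

open MvPolynomial (X eval pderiv)

lemma hasFDerivAt_eval_self_conj (p : MvPolynomial (Fin 2) ℂ) (z : ℂ) :
    HasFDerivAt (𝕜 := ℝ) (fun w ↦ eval ![w, conj w] p)
      (eval ![z, conj z] (pderiv 0 p) • ContinuousLinearMap.id ℝ ℂ +
        eval ![z, conj z] (pderiv 1 p) • conjCLE.toContinuousLinearMap) z := by
  have hc : ∀ i : Fin 2, HasFDerivAt (𝕜 := ℝ) (fun w : ℂ ↦ ![w, conj w] i)
      (![ContinuousLinearMap.id ℝ ℂ, conjCLE.toContinuousLinearMap] i) z :=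
    Fin.forall_fin_two.2 ⟨hasFDerivAt_id z, conjCLE.hasFDerivAt⟩
  simpa [Fin.sum_univ_two] using! hasFDerivAt_mvPolynomial_eval hc p

lemma integrable_eval_self_conj {μ : Measure ℂ} [IsGaussian μ] (p : MvPolynomial (Fin 2) ℂ) :
    Integrable (fun z ↦ eval ![z, conj z] p) μ := by
  induction p using MvPolynomial.induction_on' with
  | monomial u a =>
    have moment : Integrable (fun z : ℂ ↦ ‖z‖ ^ (u 0 + u 1)) μ :=
      (IsGaussian.memLp_id μ _ (ENNReal.natCast_ne_top _)).integrable_norm_pow'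
    have eval_monomial (z : ℂ) : eval ![z, conj z] (MvPolynomial.monomial u a) =
        a * (z ^ u 0 * conj z ^ u 1) := by
      simp [MvPolynomial.eval_monomial, Finsupp.prod_fintype, Fin.prod_univ_two]
    simp only [eval_monomial]
    refine ((integrable_norm_iff (by fun_prop)).1 ?_).const_mul a
    simpa [pow_add] using moment
  | add p q hp hq => simpa only [map_add] using! hp.add hq

/-- The expectation `p ↦ E[p(Z, Z̄)]` for `Z` complex Gaussian with parameter `ρ`. The variables
`X 0` and `X 1` stand for `z` and `z̄`, so `pderiv 0` and `pderiv 1` are Wirtinger derivatives. -/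
noncomputable def complexGaussianExpectation (ρ : ℝ) : MvPolynomial (Fin 2) ℂ →ₗ[ℂ] ℂ where
  toFun p := ∫ z, eval ![z, conj z] p ∂complexGaussian ρ
  map_add' p q := by
    simp only [map_add]
    exact integral_add (integrable_eval_self_conj p) (integrable_eval_self_conj q)
  map_smul' c p := by
    simp only [MvPolynomial.smul_eval, RingHom.id_apply, smul_eq_mul]
    exact integral_const_mul c _

lemma complexGaussianExpectation_apply (p : MvPolynomial (Fin 2) ℂ) :
    complexGaussianExpectation ρ p = ∫ z, eval ![z, conj z] p ∂complexGaussian ρ := rfl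

lemma complexGaussianExpectation_one : complexGaussianExpectation ρ 1 = 1 := by
  simp [complexGaussianExpectation_apply]

lemma complexGaussianExpectation_X_zero_add_X_one_mul (hρ : 0 ≤ ρ) (p : MvPolynomial (Fin 2) ℂ) :
    complexGaussianExpectation ρ ((X 0 + X 1) * p) =
      ρ * complexGaussianExpectation ρ (pderiv 0 p + pderiv 1 p) := by
  have eval_add_mul (z : ℂ) :
      eval ![z, conj z] ((X 0 + X 1) * p) = 2 * (z.re • eval ![z, conj z] p) := by
    simp [add_conj, mul_assoc]
  have fderiv_one (z : ℂ) : fderiv ℝ (fun w ↦ eval ![w, conj w] p) z 1 =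
      eval ![z, conj z] (pderiv 0 p + pderiv 1 p) := by
    simp [(hasFDerivAt_eval_self_conj p z).fderiv]
  have integrable_re : Integrable (fun z ↦ z.re • eval ![z, conj z] p) (complexGaussian ρ) := by
    refine (integrable_const_mul_iff (two_ne_zero' ℂ).isUnit _).1 ?_
    simp only [← eval_add_mul]
    exact integrable_eval_self_conj _
  have stein := integral_re_smul_complexGaussian hρ
    (fun z ↦ (hasFDerivAt_eval_self_conj p z).differentiableAt) (integrable_eval_self_conj p)
    (by simpa only [fderiv_one] using integrable_eval_self_conj _) integrable_re
  simp only [complexGaussianExpectation_apply, eval_add_mul, integral_const_mul, stein, fderiv_one]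
  rw [real_smul]
  push_cast
  ring

lemma complexGaussianExpectation_X_zero_sub_X_one_mul (hρ : 0 ≤ ρ) (p : MvPolynomial (Fin 2) ℂ) :
    complexGaussianExpectation ρ ((X 0 - X 1) * p) =
      ρ * complexGaussianExpectation ρ (pderiv 1 p - pderiv 0 p) := by
  have eval_sub_mul (z : ℂ) :
      eval ![z, conj z] ((X 0 - X 1) * p) = 2 * I * (z.im • eval ![z, conj z] p) := by
    simp [sub_conj, mul_assoc, mul_left_comm]
  have fderiv_I (z : ℂ) : fderiv ℝ (fun w ↦ eval ![w, conj w] p) z I =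
      -I * eval ![z, conj z] (pderiv 1 p - pderiv 0 p) := by
    rw [(hasFDerivAt_eval_self_conj p z).fderiv, map_sub]
    simp [mul_comm I, sub_mul, ← sub_eq_add_neg]
  have integrable_im : Integrable (fun z ↦ z.im • eval ![z, conj z] p) (complexGaussian ρ) := by
    refine (integrable_const_mul_iff (mul_ne_zero two_ne_zero I_ne_zero).isUnit _).1 ?_
    simp only [← eval_sub_mul]
    exact integrable_eval_self_conj _
  have stein := integral_im_smul_complexGaussian hρ
    (fun z ↦ (hasFDerivAt_eval_self_conj p z).differentiableAt) (integrable_eval_self_conj p)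
    (by simpa only [fderiv_I] using (integrable_eval_self_conj _).const_mul _) integrable_im
  simp only [complexGaussianExpectation_apply, eval_sub_mul, integral_const_mul, stein, fderiv_I]
  rw [real_smul]
  push_cast
  linear_combination
    (-ρ * ∫ z, eval ![z, conj z] (pderiv 1 p - pderiv 0 p) ∂complexGaussian ρ) * I_mul_I

lemma complexGaussianExpectation_X_zero_mul (hρ : 0 ≤ ρ) (p : MvPolynomial (Fin 2) ℂ) :
    complexGaussianExpectation ρ (X 0 * p) = ρ * complexGaussianExpectation ρ (pderiv 1 p) := by
  have add_part := complexGaussianExpectation_X_zero_add_X_one_mul hρ p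
  have sub_part := complexGaussianExpectation_X_zero_sub_X_one_mul hρ p
  simp only [add_mul, sub_mul, map_add, map_sub] at add_part sub_part
  linear_combination (add_part + sub_part) / 2

lemma complexGaussianExpectation_X_one_mul (hρ : 0 ≤ ρ) (p : MvPolynomial (Fin 2) ℂ) :
    complexGaussianExpectation ρ (X 1 * p) = ρ * complexGaussianExpectation ρ (pderiv 0 p) := by
  have add_part := complexGaussianExpectation_X_zero_add_X_one_mul hρ p
  have sub_part := complexGaussianExpectation_X_zero_sub_X_one_mul hρ p
  simp only [add_mul, sub_mul, map_add, map_sub] at add_part sub_part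
  linear_combination (add_part - sub_part) / 2

lemma complexGaussianExpectation_itoHermite_mul_itoHermite (hρ : 0 ≤ ρ) (m n p q : ℕ) :
    complexGaussianExpectation ρ
        (itoHermite (ρ : ℂ) (X 0) (X 1) m n * itoHermite (ρ : ℂ) (X 0) (X 1) q p) =
      if m = p ∧ n = q then m.factorial * n.factorial * (ρ : ℂ) ^ (m + n) else 0 := by
  simpa [complexGaussianExpectation_one] using
    map_itoHermite_mul_itoHermite (Dz := pderiv 0) (Dw := pderiv 1) m n
      (MvPolynomial.pderiv_X_self 0) (MvPolynomial.pderiv_X_of_ne one_ne_zero)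
      (MvPolynomial.pderiv_X_of_ne zero_ne_one) (MvPolynomial.pderiv_X_self 1)
      (complexGaussianExpectation_X_zero_mul hρ) (complexGaussianExpectation_X_one_mul hρ) p q

lemma complexHermite_eq_itoHermite (m n : ℕ) (z : ℂ) (ρ : ℝ) :
    complexHermite m n z ρ = itoHermite (ρ : ℂ) z (conj z) m n := by
  refine sum_congr rfl fun k _ ↦ ?_
  rw [neg_pow, smul_eq_mul]
  ring

lemma conj_complexHermite (m n : ℕ) (z : ℂ) (ρ : ℝ) :
    conj (complexHermite m n z ρ) = complexHermite n m z ρ := by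
  rw [complexHermite_eq_itoHermite n, ← itoHermite_swap]
  simp [complexHermite_eq_itoHermite, itoHermite]

lemma eval_itoHermite (m n : ℕ) (z : ℂ) (ρ : ℝ) :
    eval ![z, conj z] (itoHermite (ρ : ℂ) (X 0) (X 1) m n) = complexHermite m n z ρ := by
  rw [complexHermite_eq_itoHermite, ← MvPolynomial.coe_aeval_eq_eval, RingHom.coe_coe,
    map_itoHermite]
  simp

lemma integral_complexHermite_mul_conj (hρ : 0 ≤ ρ) (m n p q : ℕ) :
    ∫ z, complexHermite m n z ρ * conj (complexHermite p q z ρ) ∂complexGaussian ρ =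
      if m = p ∧ n = q then m.factorial * n.factorial * (ρ : ℂ) ^ (m + n) else 0 := by
  rw [← complexGaussianExpectation_itoHermite_mul_itoHermite hρ, complexGaussianExpectation_apply]
  simp only [map_mul, eval_itoHermite, conj_complexHermite]

lemma continuous_complexHermite (m n : ℕ) (ρ : ℝ) : Continuous (complexHermite m n · ρ) := by
  unfold complexHermite
  fun_prop

end ComplexGaussian

/-- Orthogonality of complex Hermite polynomials: for a complex Gaussian variable `Z` with
parameter `ρ > 0`, `E[J_{m,n}(Z,ρ)·conj(J_{p,q}(Z,ρ))] = 0` unless `m = p` and `n = q`,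
and `E[|J_{m,n}(Z,ρ)|²] = m!·n!·ρ^{m+n}`. -/
theorem complexHermite_orthogonality
    {Ω : Type*} [MeasurableSpace Ω] (P : Measure Ω) [IsProbabilityMeasure P]
    (Z : Ω → ℂ) (hZmeas : Measurable Z) (ρ : ℝ) (hρ : 0 < ρ)
    (hZ : Measure.map Z P = complexGaussian ρ) (m n p q : ℕ) :
    (¬(m = p ∧ n = q) →
      ∫ ω, complexHermite m n (Z ω) ρ * (starRingEnd ℂ) (complexHermite p q (Z ω) ρ) ∂P = 0) ∧
    ∫ ω, complexHermite m n (Z ω) ρ * (starRingEnd ℂ) (complexHermite m n (Z ω) ρ) ∂P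
      = (Nat.factorial m : ℂ) * (Nat.factorial n : ℂ) * (ρ : ℂ) ^ (m + n) := by
  have integral_comp_Z (p q : ℕ) :
      ∫ ω, complexHermite m n (Z ω) ρ * (starRingEnd ℂ) (complexHermite p q (Z ω) ρ) ∂P =
        if m = p ∧ n = q then m.factorial * n.factorial * (ρ : ℂ) ^ (m + n) else 0 := by
    rw [← integral_complexHermite_mul_conj hρ.le, ← hZ, integral_map hZmeas.aemeasurable]
    exact ((continuous_complexHermite m n ρ).mul
      (continuous_conj.comp (continuous_complexHermite p q ρ))).aestronglyMeasurable
  exact ⟨fun h ↦ (integral_comp_Z p q).trans (if_neg h),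
    (integral_comp_Z m n).trans (if_pos ⟨rfl, rfl⟩)⟩
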